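/- arXiv:math/0002019 — 3 statements merged into one kernel-verified Lean document; each statement's English description precedes it below -/
import Mathlib

section
/- Let A be an m×m nonnegative primitive real matrix with Perron–Frobenius eigenvalue λ. If a vector X ∈ ℝ^m satisfies 0 ≤ λX and λX ≤ AX (entrywise), then AX = λX. -/
/-!
Let `A *ᵥ v = μ • v` with `v` positive, and let `c` be the largest of the ratios `X i / v i`. Then
`w = c • v - X` is nonnegative, vanishes at some index, and satisfies `A *ᵥ w ≤ μ • w`. If
`w i = 0`, this inequality at `i` forces `w j = 0` whenever `0 < A i j`, so the zero spreads along
the directed graph of `A`, which is strongly connected. Hence `w = 0`, that is, `X = c • v`.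
-/

section

open scoped Matrix

variable {n : Type*}

section MinimumPrinciple

variable [Fintype n] {R : Type*} [Ring R] [LinearOrder R] [IsStrictOrderedRing R]
  {A : Matrix n n R} {w : n → R} {μ : R} {i j : n}

lemma apply_eq_zero_of_mulVec_apply_nonpos (hA : ∀ j, 0 ≤ A i j) (hw : 0 ≤ w)
    (hAw : (A *ᵥ w) i ≤ 0) (hij : 0 < A i j) : w j = 0 := by
  have hterm_nonneg : ∀ k ∈ Finset.univ, 0 ≤ A i k * w k := fun k _ ↦ mul_nonneg (hA k) (hw k)
  have hterm_nonpos : A i j * w j ≤ 0 :=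
    (Finset.single_le_sum hterm_nonneg (Finset.mem_univ j)).trans hAw
  exact (nonpos_of_mul_nonpos_right hterm_nonpos hij).antisymm (hw j)

lemma apply_eq_zero_of_path (hA : ∀ i j, 0 ≤ A i j) (hw : 0 ≤ w) (hAw : A *ᵥ w ≤ μ • w)
    (hi : w i = 0) (p : @Quiver.Path n A.toQuiver i j) : w j = 0 := by
  let : Quiver n := A.toQuiver
  induction p with
  | nil => exact hi
  | @cons k _ _ e hk =>
    have hAw_k : (A *ᵥ w) k ≤ 0 := by simpa [hk] using hAw k
    exact apply_eq_zero_of_mulVec_apply_nonpos (hA k) hw hAw_k e.down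

lemma eq_zero_of_mulVec_le_smul (hA : A.IsIrreducible) (hw : 0 ≤ w) (hAw : A *ᵥ w ≤ μ • w)
    (hi : w i = 0) : w = 0 := by
  funext j
  obtain ⟨p, -⟩ := hA.connected i j
  exact apply_eq_zero_of_path hA.nonneg hw hAw hi p

end MinimumPrinciple

variable {K : Type*} [Field K] [LinearOrder K] [IsStrictOrderedRing K] {v : n → K}

lemma exists_le_smul_and_apply_eq [Finite n] [Nonempty n] (hv : ∀ i, 0 < v i) (X : n → K) :
    ∃ c : K, X ≤ c • v ∧ ∃ i, X i = c * v i := by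
  obtain ⟨i, hi⟩ := Finite.exists_max fun i ↦ X i / v i
  exact ⟨X i / v i, fun j ↦ (div_le_iff₀ (hv j)).1 (hi j), i, (div_mul_cancel₀ _ (hv i).ne').symm⟩

variable [Fintype n] {A : Matrix n n K} {μ : K} {X : n → K}

lemma exists_eq_smul_of_smul_le_mulVec (hA : A.IsIrreducible) (hv : ∀ i, 0 < v i)
    (hAv : A *ᵥ v = μ • v) (hX : μ • X ≤ A *ᵥ X) : ∃ c : K, X = c • v := by
  cases isEmpty_or_nonempty n
  · exact ⟨0, Subsingleton.elim _ _⟩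
  obtain ⟨c, hc, i, hi⟩ := exists_le_smul_and_apply_eq hv X
  have hAw : A *ᵥ (c • v - X) ≤ μ • (c • v - X) :=
    calc A *ᵥ (c • v - X) = μ • c • v - A *ᵥ X := by
          rw [Matrix.mulVec_sub, Matrix.mulVec_smul, hAv, smul_comm]
      _ ≤ μ • c • v - μ • X := sub_le_sub_left hX _
      _ = μ • (c • v - X) := (smul_sub _ _ _).symm
  have hwi : (c • v - X) i = 0 := by simp [hi]
  exact ⟨c, (sub_eq_zero.1 (eq_zero_of_mulVec_le_smul hA (sub_nonneg.2 hc) hAw hwi)).symm⟩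

theorem stmt0_general (hA : A.IsIrreducible) (hv : ∀ i, 0 < v i) (hAv : A *ᵥ v = μ • v)
    (hX : μ • X ≤ A *ᵥ X) : A *ᵥ X = μ • X := by
  obtain ⟨c, rfl⟩ := exists_eq_smul_of_smul_le_mulVec hA hv hAv hX
  rw [Matrix.mulVec_smul, hAv, smul_comm]

end

/-- Let `A` be an `m × m` nonnegative primitive real matrix with
Perron–Frobenius eigenvalue `lam` (the unique eigenvalue `lam > 0` admitting a right
eigenvector with all entries strictly positive).  If a vector `X ∈ ℝ^m` satisfies
`0 ≤ lam • X` and `lam • X ≤ A.mulVec X` entrywise, then `A.mulVec X = lam • X`. -/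
theorem stmt0 {m : ℕ} (A : Matrix (Fin m) (Fin m) ℝ) (lam : ℝ)
    (hA_nonneg : ∀ i j, 0 ≤ A i j)
    (hA_prim : ∃ l > 0, ∀ i j, 0 < (A ^ l) i j)
    (hlam_pos : 0 < lam)
    (hPF : ∃ v : Fin m → ℝ, (∀ i, 0 < v i) ∧ A.mulVec v = lam • v)
    (X : Fin m → ℝ)
    (h1 : ∀ i, 0 ≤ lam * X i)
    (h2 : ∀ i, lam * X i ≤ A.mulVec X i) :
    A.mulVec X = lam • X := by
  obtain ⟨v, hv, hAv⟩ := hPF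
  exact stmt0_general (Matrix.IsPrimitive.isIrreducible ⟨hA_nonneg, hA_prim⟩) hv hAv h2
end

section
/- Let X ⊆ Y ⊆ L and let (C_i)_{i∈I} be a finite or countable family of pairwise disjoint cosets whose union is the coset part C(X). Then Σ_{i∈I} [L : C_i]⁻¹ ≤ c(Y). In particular, the total index is monotone: c(X) ≤ c(Y). -/
/-! Cosets `a + Q^k ℤ^n` in the lattice `L = ℤ^n`, the coset part of a subset,
efficient decompositions and the total index, following Lee–Moody,
"Lattice Substitution Systems and Model Sets". -/

/-- The lattice `L = ℤ^n`. -/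
abbrev LatZ (n : ℕ) := Fin n → ℤ

/-- `Q` is an inflation of `L = ℤ^n`: `det Q ≠ 0` and `⋂_{k≥0} Q^k L = {0}`. -/
def IsInflation {n : ℕ} (Q : Matrix (Fin n) (Fin n) ℤ) : Prop :=
  Q.det ≠ 0 ∧ (⋂ k : ℕ, Set.range (Q ^ k).mulVec) = {0}

/-- The coset `a + Q^k ℤ^n` in `L = ℤ^n`. -/
def cosetSet {n : ℕ} (Q : Matrix (Fin n) (Fin n) ℤ) (a : LatZ n) (k : ℕ) :
    Set (LatZ n) :=
  {y | ∃ x, y = a + (Q ^ k).mulVec x}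

/-- `C` is a coset in `L = ℤ^n` relative to `Q`, i.e. `C = a + Q^k L` for some
`a ∈ L`, `k ≥ 0`. -/
def IsCoset {n : ℕ} (Q : Matrix (Fin n) (Fin n) ℤ) (C : Set (LatZ n)) : Prop :=
  ∃ a k, C = cosetSet Q a k

/-- The coset part `C(V)` of `V ⊆ L`: the union of all cosets contained in `V`. -/
def cosetPart {n : ℕ} (Q : Matrix (Fin n) (Fin n) ℤ) (V : Set (LatZ n)) :
    Set (LatZ n) :=
  ⋃₀ {C | IsCoset Q C ∧ C ⊆ V}

/-- The reciprocal `[L : C]⁻¹ = q^{-k}` of the index of a coset `C = a + Q^k L`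
(where `q = |det Q|`), as an extended nonnegative real. -/
noncomputable def idxInv {n : ℕ} (Q : Matrix (Fin n) (Fin n) ℤ)
    (C : Set (LatZ n)) : ENNReal :=
  sSup {r | ∃ a k, C = cosetSet Q a k ∧ r = ((Q.det.natAbs : ENNReal) ^ k)⁻¹}

/-- `D` is an efficient decomposition of `V ⊆ L`: a countable collection of pairwise
disjoint cosets, each contained in `V`, whose union is the coset part `C(V)`, and such
that every coset contained in `V` is contained in some member of `D`. -/
def EffDecomp {n : ℕ} (Q : Matrix (Fin n) (Fin n) ℤ) (V : Set (LatZ n))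
    (D : Set (Set (LatZ n))) : Prop :=
  D.Countable ∧ (∀ C ∈ D, IsCoset Q C ∧ C ⊆ V) ∧
    D.Pairwise (fun C C' => Disjoint C C') ∧ ⋃₀ D = cosetPart Q V ∧
    ∀ C', IsCoset Q C' → C' ⊆ V → ∃ C ∈ D, C' ⊆ C

/-- The total index `c(V)` of `V ⊆ L`: the sum of the reciprocals of the indices of
the members of an efficient decomposition of `V` (well-defined, since the efficient
decomposition is unique). -/
noncomputable def totalIndex {n : ℕ} (Q : Matrix (Fin n) (Fin n) ℤ)
    (V : Set (LatZ n)) : ENNReal :=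
  ⨆ D : {D : Set (Set (LatZ n)) // EffDecomp Q V D},
    ∑' C : (D : Set (Set (LatZ n))), idxInv Q (C : Set (LatZ n))

/-! Cosets of the `Q ^ k L` are pairwise nested or disjoint, so the maximal cosets contained in `Y`
form an efficient decomposition of `Y`, and every coset contained in `Y` lies in exactly one of
them. It remains to see that pairwise disjoint cosets `Cᵢ` contained in a coset `E` satisfy
`∑ [L : Cᵢ]⁻¹ ≤ [L : E]⁻¹`. For finitely many `Cᵢ` this is a count in the finite quotient of `L`
by the intersection of the subgroups involved. -/

section LeftCosets

open scoped Pointwise ENNReal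
open Function (onFun)

variable {G : Type*} [Group G]

@[to_additive le_of_leftAddCoset_subset]
theorem le_of_leftCoset_subset {H K : Subgroup G} {g x : G}
    (h : g • (K : Set G) ⊆ x • (H : Set G)) : K ≤ H := by
  intro k hk
  have hg : x⁻¹ * g ∈ H := (mem_leftCoset_iff x).mp (h (mem_own_leftCoset K.toSubmonoid g))
  have hgk : x⁻¹ * (g * k) ∈ H := (mem_leftCoset_iff x).mp (h (mem_leftCoset g hk))
  rwa [← mul_assoc, H.mul_mem_cancel_left hg] at hgk

@[to_additive leftAddCoset_subset_of_le_of_not_disjoint]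
theorem leftCoset_subset_of_le_of_not_disjoint {H K : Subgroup G} (hKH : K ≤ H) {g x : G}
    (h : ¬Disjoint (g • (K : Set G)) (x • (H : Set G))) :
    g • (K : Set G) ⊆ x • (H : Set G) := by
  obtain ⟨y, hyK, hyH⟩ := Set.not_disjoint_iff.mp h
  rw [mem_leftCoset_iff] at hyK hyH
  rw [(leftCoset_eq_iff H).mpr hyH, (leftCoset_eq_iff K).mpr hyK]
  exact Set.smul_set_mono hKH

@[to_additive ncard_image_mk_leftAddCoset]
theorem ncard_image_mk_leftCoset (N K : Subgroup G) (g : G) :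
    ((QuotientGroup.mk : G → G ⧸ N) '' (g • (K : Set G))).ncard = N.relIndex K := by
  have hsmul (k : K) : k • ((1 : G) : G ⧸ N) = ((k : G) : G ⧸ N) :=
    congrArg QuotientGroup.mk (mul_one (k : G))
  have horbit : (QuotientGroup.mk : G → G ⧸ N) '' K =
      MulAction.orbit K ((1 : G) : G ⧸ N) := by
    ext z
    simp [MulAction.mem_orbit_iff, hsmul]
  have hstab : MulAction.stabilizer K ((1 : G) : G ⧸ N) = N.subgroupOf K := by
    ext k
    simp [MulAction.mem_stabilizer_iff, hsmul, Subgroup.mem_subgroupOf, QuotientGroup.eq]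
  rw [Set.image_smul_comm QuotientGroup.mk g (K : Set G) fun _ => rfl, Set.ncard_smul_set, horbit,
    ← MulAction.index_stabilizer, hstab, Subgroup.relIndex]

@[to_additive disjoint_image_mk_leftAddCoset]
theorem disjoint_image_mk_leftCoset {N K : Subgroup G} (hNK : N ≤ K) {g : G} {S : Set G}
    (h : Disjoint (g • (K : Set G)) S) :
    Disjoint ((QuotientGroup.mk : G → G ⧸ N) '' (g • (K : Set G))) (QuotientGroup.mk '' S) := by
  rw [Set.disjoint_left] at h ⊢
  rintro _ ⟨y, hy, rfl⟩ ⟨z, hz, hzy⟩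
  refine h ?_ hz
  rw [mem_leftCoset_iff] at hy ⊢
  simpa [mul_assoc] using K.mul_mem hy (hNK (QuotientGroup.eq.mp hzy.symm))

@[to_additive sum_relIndex_le_of_leftAddCoset_subset]
theorem sum_relIndex_le_of_leftCoset_subset {ι : Type*} {s : Finset ι} {N H : Subgroup G}
    [N.FiniteIndex] {K : ι → Subgroup G} {g : ι → G} {x : G} (hN : ∀ i ∈ s, N ≤ K i)
    (hdisj : (s : Set ι).PairwiseDisjoint fun i => g i • (K i : Set G))
    (hsub : ∀ i ∈ s, g i • (K i : Set G) ⊆ x • (H : Set G)) :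
    ∑ i ∈ s, N.relIndex (K i) ≤ N.relIndex H := by
  let π : G → G ⧸ N := QuotientGroup.mk
  calc ∑ i ∈ s, N.relIndex (K i)
      = ∑ i ∈ s, (π '' (g i • (K i : Set G))).ncard := by
        simp only [π, ncard_image_mk_leftCoset]
    _ = (⋃ i ∈ (s : Set ι), π '' (g i • (K i : Set G))).ncard := by
        rw [s.finite_toSet.ncard_biUnion (fun _ _ => Set.toFinite _), finsum_mem_coe_finset]
        exact fun i hi j hj hij => disjoint_image_mk_leftCoset (hN i hi) (hdisj hi hj hij)
    _ ≤ (π '' (x • (H : Set G))).ncard :=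
        Set.ncard_le_ncard (Set.iUnion₂_subset fun i hi => Set.image_mono (hsub i hi))
    _ = N.relIndex H := ncard_image_mk_leftCoset N H x

@[to_additive inv_addSubgroup_index_eq_relIndex_mul]
theorem inv_subgroup_index_eq_relIndex_mul {N K : Subgroup G} [N.FiniteIndex] (h : N ≤ K) :
    (K.index : ℝ≥0∞)⁻¹ = N.relIndex K * (N.index : ℝ≥0∞)⁻¹ := by
  have hN : (N.index : ℝ≥0∞) ≠ 0 := Nat.cast_ne_zero.mpr Subgroup.FiniteIndex.index_ne_zero
  refine (ENNReal.eq_inv_of_mul_eq_one_left ?_).symm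
  rw [mul_right_comm, ← Nat.cast_mul, Subgroup.relIndex_mul_index h,
    ENNReal.mul_inv_cancel hN (ENNReal.natCast_ne_top _)]

@[to_additive sum_inv_index_le_of_leftAddCoset_subset]
theorem sum_inv_index_le_of_leftCoset_subset {ι : Type*} (s : Finset ι) {H : Subgroup G}
    [H.FiniteIndex] {K : ι → Subgroup G} {g : ι → G} {x : G}
    (hK : ∀ i ∈ s, (K i).FiniteIndex)
    (hdisj : (s : Set ι).PairwiseDisjoint fun i => g i • (K i : Set G))
    (hsub : ∀ i ∈ s, g i • (K i : Set G) ⊆ x • (H : Set G)) :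
    ∑ i ∈ s, ((K i).index : ℝ≥0∞)⁻¹ ≤ (H.index : ℝ≥0∞)⁻¹ := by
  have : (⨅ i ∈ s, K i).FiniteIndex := Subgroup.finiteIndex_iInf' K hK
  let N : Subgroup G := H ⊓ ⨅ i ∈ s, K i
  have hNK (i) (hi : i ∈ s) : N ≤ K i := inf_le_right.trans (iInf₂_le i hi)
  calc ∑ i ∈ s, ((K i).index : ℝ≥0∞)⁻¹
      = ((∑ i ∈ s, N.relIndex (K i) : ℕ) : ℝ≥0∞) * (N.index : ℝ≥0∞)⁻¹ := by
        rw [Nat.cast_sum, Finset.sum_mul]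
        exact Finset.sum_congr rfl fun i hi => inv_subgroup_index_eq_relIndex_mul (hNK i hi)
    _ ≤ N.relIndex H * (N.index : ℝ≥0∞)⁻¹ := by
        gcongr
        exact sum_relIndex_le_of_leftCoset_subset hNK hdisj hsub
    _ = (H.index : ℝ≥0∞)⁻¹ := (inv_subgroup_index_eq_relIndex_mul inf_le_left).symm

@[to_additive tsum_inv_index_le_of_leftAddCoset_subset]
theorem tsum_inv_index_le_of_leftCoset_subset {ι : Type*} {H : Subgroup G} [H.FiniteIndex]
    {K : ι → Subgroup G} [∀ i, (K i).FiniteIndex] {g : ι → G} {x : G}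
    (hdisj : Pairwise (onFun Disjoint fun i => g i • (K i : Set G)))
    (hsub : ∀ i, g i • (K i : Set G) ⊆ x • (H : Set G)) :
    ∑' i, ((K i).index : ℝ≥0∞)⁻¹ ≤ (H.index : ℝ≥0∞)⁻¹ := by
  rw [ENNReal.tsum_eq_iSup_sum]
  exact iSup_le fun s => sum_inv_index_le_of_leftCoset_subset s (fun _ _ => inferInstance)
    (hdisj.set_pairwise s) fun i _ => hsub i

end LeftCosets

theorem index_range_mulVecLin {m : Type*} [Fintype m] [DecidableEq m] {A : Matrix m m ℤ}
    (hA : A.det ≠ 0) : (LinearMap.range A.mulVecLin).toAddSubgroup.index = A.det.natAbs := by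
  let e := LinearEquiv.ofInjective A.mulVecLin (Matrix.mulVec_injective_of_det_ne_zero hA)
  have hcol (i : m) : (((Pi.basisFun ℤ m).map e i : LinearMap.range A.mulVecLin) : m → ℤ) =
      A.col i := by
    rw [Module.Basis.map_apply, Pi.basisFun_apply]
    exact A.mulVec_single_one i
  rw [AddSubgroup.index_eq_natAbs_det (Pi.basisFun ℤ m) _ ((Pi.basisFun ℤ m).map e),
    Pi.basisFun_det_apply, ← Matrix.det_transpose A]
  congr 2
  ext i j
  exact congrFun (hcol i) j

section Inflation

open scoped Pointwise ENNReal
open Function (onFun)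

variable {n : ℕ} {Q : Matrix (Fin n) (Fin n) ℤ}

/-- The subgroup `Q ^ k L` of `L = ℤ^n`, of which the sets `cosetSet Q a k` are the cosets. -/
def powSublattice (Q : Matrix (Fin n) (Fin n) ℤ) (k : ℕ) : AddSubgroup (LatZ n) :=
  (LinearMap.range (Q ^ k).mulVecLin).toAddSubgroup

theorem powSublattice_antitone (Q : Matrix (Fin n) (Fin n) ℤ) : Antitone (powSublattice Q) := by
  rintro k m hkm _ ⟨x, rfl⟩
  refine ⟨(Q ^ (m - k)).mulVec x, ?_⟩
  simp only [Matrix.mulVecLin_apply, Matrix.mulVec_mulVec, ← pow_add, Nat.add_sub_cancel' hkm]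

theorem index_powSublattice (hQ : Q.det ≠ 0) (k : ℕ) :
    (powSublattice Q k).index = Q.det.natAbs ^ k := by
  have hQk : (Q ^ k).det ≠ 0 := by
    rw [Matrix.det_pow]
    exact pow_ne_zero k hQ
  rw [powSublattice, index_range_mulVecLin hQk, Matrix.det_pow, Int.natAbs_pow]

theorem finiteIndex_powSublattice (hQ : Q.det ≠ 0) (k : ℕ) : (powSublattice Q k).FiniteIndex := by
  refine ⟨?_⟩
  rw [index_powSublattice hQ]
  exact pow_ne_zero k (Int.natAbs_ne_zero.mpr hQ)

theorem cosetSet_eq_vadd (Q : Matrix (Fin n) (Fin n) ℤ) (a : LatZ n) (k : ℕ) :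
    cosetSet Q a k = a +ᵥ (powSublattice Q k : Set (LatZ n)) := by
  ext y
  simp [cosetSet, powSublattice, Set.mem_vadd_set, eq_comm]

theorem self_mem_cosetSet (Q : Matrix (Fin n) (Fin n) ℤ) (a : LatZ n) (k : ℕ) :
    a ∈ cosetSet Q a k :=
  ⟨0, by simp⟩

theorem cosetSet_subset_of_le_of_not_disjoint {a b : LatZ n} {j k : ℕ} (hjk : j ≤ k)
    (h : ¬Disjoint (cosetSet Q a k) (cosetSet Q b j)) : cosetSet Q a k ⊆ cosetSet Q b j := by
  rw [cosetSet_eq_vadd, cosetSet_eq_vadd] at h ⊢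
  exact leftAddCoset_subset_of_le_of_not_disjoint (powSublattice_antitone Q hjk) h

theorem cosetSet_antitone (Q : Matrix (Fin n) (Fin n) ℤ) (a : LatZ n) :
    Antitone (cosetSet Q a) := by
  intro j k hjk
  exact cosetSet_subset_of_le_of_not_disjoint hjk <|
    Set.not_disjoint_iff.mpr ⟨a, self_mem_cosetSet Q a k, self_mem_cosetSet Q a j⟩

theorem cosetSet_eq_of_mem {a b : LatZ n} {k : ℕ} (h : a ∈ cosetSet Q b k) :
    cosetSet Q b k = cosetSet Q a k := by
  have hab : ¬Disjoint (cosetSet Q b k) (cosetSet Q a k) :=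
    Set.not_disjoint_iff.mpr ⟨a, h, self_mem_cosetSet Q a k⟩
  exact subset_antisymm (cosetSet_subset_of_le_of_not_disjoint le_rfl hab)
    (cosetSet_subset_of_le_of_not_disjoint le_rfl (disjoint_comm.not.mp hab))

theorem IsCoset.subset_or_subset_of_not_disjoint {C E : Set (LatZ n)} (hC : IsCoset Q C)
    (hE : IsCoset Q E) (h : ¬Disjoint C E) : C ⊆ E ∨ E ⊆ C := by
  obtain ⟨a, k, rfl⟩ := hC
  obtain ⟨b, j, rfl⟩ := hE
  rcases le_total j k with hjk | hkj
  · exact .inl (cosetSet_subset_of_le_of_not_disjoint hjk h)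
  · exact .inr (cosetSet_subset_of_le_of_not_disjoint hkj (disjoint_comm.not.mp h))

theorem idxInv_cosetSet (hQ : Q.det ≠ 0) (a : LatZ n) (k : ℕ) :
    idxInv Q (cosetSet Q a k) = ((powSublattice Q k).index : ℝ≥0∞)⁻¹ := by
  have hvalues : {r : ℝ≥0∞ | ∃ b j, cosetSet Q a k = cosetSet Q b j ∧
      r = ((Q.det.natAbs : ℝ≥0∞) ^ j)⁻¹} = {((powSublattice Q k).index : ℝ≥0∞)⁻¹} := by
    refine Set.eq_singleton_iff_unique_mem.mpr
      ⟨⟨a, k, rfl, by rw [index_powSublattice hQ, Nat.cast_pow]⟩, ?_⟩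
    rintro _ ⟨b, j, hab, rfl⟩
    rw [cosetSet_eq_vadd, cosetSet_eq_vadd] at hab
    have hkj : powSublattice Q k = powSublattice Q j :=
      le_antisymm (le_of_leftAddCoset_subset hab.subset) (le_of_leftAddCoset_subset hab.superset)
    rw [hkj, index_powSublattice hQ, Nat.cast_pow]
  rw [idxInv, hvalues, sSup_singleton]

theorem tsum_idxInv_le_of_subset (hQ : Q.det ≠ 0) {ι : Type*} {C : ι → Set (LatZ n)}
    {E : Set (LatZ n)} (hC : ∀ i, IsCoset Q (C i)) (hE : IsCoset Q E)
    (hdisj : Pairwise (onFun Disjoint C)) (hCE : ∀ i, C i ⊆ E) :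
    ∑' i, idxInv Q (C i) ≤ idxInv Q E := by
  choose a k hak using hC
  obtain rfl : C = fun i => cosetSet Q (a i) (k i) := funext hak
  obtain ⟨b, j, rfl⟩ := hE
  have := finiteIndex_powSublattice hQ
  simp only [idxInv_cosetSet hQ]
  simp only [cosetSet_eq_vadd] at hdisj hCE
  exact tsum_inv_index_le_of_leftAddCoset_subset hdisj hCE

theorem countable_setOf_isCoset (Q : Matrix (Fin n) (Fin n) ℤ) : {C | IsCoset Q C}.Countable := by
  refine (Set.countable_range fun p : LatZ n × ℕ => cosetSet Q p.1 p.2).mono ?_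
  rintro _ ⟨a, k, rfl⟩
  exact ⟨(a, k), rfl⟩

/-- The cosets contained in `V` that are maximal under inclusion; they form the efficient
decomposition of `V`. -/
def maximalCosets (Q : Matrix (Fin n) (Fin n) ℤ) (V : Set (LatZ n)) : Set (Set (LatZ n)) :=
  {C | Maximal (fun E => IsCoset Q E ∧ E ⊆ V) C}

theorem mem_maximalCosets {C V : Set (LatZ n)} :
    C ∈ maximalCosets Q V ↔ Maximal (fun E => IsCoset Q E ∧ E ⊆ V) C :=
  Iff.rfl

theorem IsCoset.exists_maximalCosets_superset {C V : Set (LatZ n)} (hC : IsCoset Q C)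
    (hCV : C ⊆ V) : ∃ E ∈ maximalCosets Q V, C ⊆ E := by
  classical
  obtain ⟨a, k, rfl⟩ := hC
  have hex : ∃ j, cosetSet Q a j ⊆ V := ⟨k, hCV⟩
  -- A coset containing `a` is some `a + Q ^ j L`, so the least `j` with `a + Q ^ j L ⊆ V` gives
  -- the maximal one.
  refine ⟨cosetSet Q a (Nat.find hex), ⟨⟨⟨a, _, rfl⟩, Nat.find_spec hex⟩, ?_⟩,
    cosetSet_antitone Q a (Nat.find_min' hex hCV)⟩
  rintro _ ⟨⟨b, j, rfl⟩, hbV⟩ hab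
  have ha : a ∈ cosetSet Q b j := hab (self_mem_cosetSet Q a _)
  rw [cosetSet_eq_of_mem ha] at hbV ⊢
  exact cosetSet_antitone Q a (Nat.find_min' hex hbV)

theorem pairwise_disjoint_maximalCosets (Q : Matrix (Fin n) (Fin n) ℤ) (V : Set (LatZ n)) :
    (maximalCosets Q V).Pairwise fun C E => Disjoint C E := by
  intro C hC E hE hne
  rw [mem_maximalCosets] at hC hE
  by_contra hCE
  rcases hC.prop.1.subset_or_subset_of_not_disjoint hE.prop.1 hCE with h | h
  · exact hne (hC.eq_of_subset hE.prop h)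
  · exact hne (hE.eq_of_subset hC.prop h).symm

theorem sUnion_maximalCosets (Q : Matrix (Fin n) (Fin n) ℤ) (V : Set (LatZ n)) :
    ⋃₀ maximalCosets Q V = cosetPart Q V := by
  refine subset_antisymm (Set.sUnion_mono fun C hC => (mem_maximalCosets.mp hC).prop)
    (Set.sUnion_subset ?_)
  rintro C ⟨hC, hCV⟩
  obtain ⟨E, hE, hCE⟩ := hC.exists_maximalCosets_superset hCV
  exact hCE.trans (Set.subset_sUnion_of_mem hE)

theorem effDecomp_maximalCosets (Q : Matrix (Fin n) (Fin n) ℤ) (V : Set (LatZ n)) :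
    EffDecomp Q V (maximalCosets Q V) :=
  ⟨(countable_setOf_isCoset Q).mono fun _ hC => (mem_maximalCosets.mp hC).prop.1,
    fun _ hC => (mem_maximalCosets.mp hC).prop,
    pairwise_disjoint_maximalCosets Q V, sUnion_maximalCosets Q V,
    fun _ hC hCV => hC.exists_maximalCosets_superset hCV⟩

theorem EffDecomp.tsum_idxInv_le (hQ : Q.det ≠ 0) {V : Set (LatZ n)} {D : Set (Set (LatZ n))}
    (hD : EffDecomp Q V D) {ι : Type*} {C : ι → Set (LatZ n)} (hC : ∀ i, IsCoset Q (C i))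
    (hdisj : Pairwise (onFun Disjoint C)) (hCV : ∀ i, C i ⊆ V) :
    ∑' i, idxInv Q (C i) ≤ ∑' E : D, idxInv Q (E : Set (LatZ n)) := by
  obtain ⟨-, hDcoset, -, -, hDmax⟩ := hD
  choose g hgD hCg using fun i => hDmax (C i) (hC i) (hCV i)
  let γ (i : ι) : D := ⟨g i, hgD i⟩
  calc ∑' i, idxInv Q (C i)
      = ∑' E : D, ∑' i : γ ⁻¹' {E}, idxInv Q (C i) := (ENNReal.tsum_fiberwise _ γ).symm
    _ ≤ ∑' E : D, idxInv Q (E : Set (LatZ n)) := ENNReal.tsum_le_tsum fun E =>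
        tsum_idxInv_le_of_subset hQ (fun i => hC i) (hDcoset E E.2).1
          (hdisj.comp_of_injective Subtype.val_injective) fun ⟨i, hi⟩ =>
            (hCg i).trans (congrArg Subtype.val hi).subset

theorem tsum_idxInv_le_totalIndex (hQ : Q.det ≠ 0) {V : Set (LatZ n)} {ι : Type*}
    {C : ι → Set (LatZ n)} (hC : ∀ i, IsCoset Q (C i)) (hdisj : Pairwise (onFun Disjoint C))
    (hCV : ∀ i, C i ⊆ V) : ∑' i, idxInv Q (C i) ≤ totalIndex Q V :=
  ((effDecomp_maximalCosets Q V).tsum_idxInv_le hQ hC hdisj hCV).trans <|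
    le_iSup (fun D : {D // EffDecomp Q V D} => ∑' E : D.1, idxInv Q (E : Set (LatZ n)))
      ⟨_, effDecomp_maximalCosets Q V⟩

theorem totalIndex_mono (hQ : Q.det ≠ 0) : Monotone (totalIndex Q) := by
  intro X Y hXY
  refine iSup_le fun ⟨D, _, hDcoset, hDdisj, _, _⟩ => ?_
  exact tsum_idxInv_le_totalIndex hQ (fun E => (hDcoset E E.2).1)
    (fun E F hne => hDdisj E.2 F.2 (Subtype.coe_ne_coe.mpr hne))
    fun E => (hDcoset E E.2).2.trans hXY

theorem cosetPart_subset (Q : Matrix (Fin n) (Fin n) ℤ) (V : Set (LatZ n)) : cosetPart Q V ⊆ V :=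
  Set.sUnion_subset fun _ hC => hC.2

end Inflation

theorem stmt15_general {n : ℕ} {Q : Matrix (Fin n) (Fin n) ℤ} (hQ : Q.det ≠ 0)
    {X Y : Set (LatZ n)} (hXY : X ⊆ Y) {ι : Type*} {C : ι → Set (LatZ n)}
    (hcoset : ∀ i, IsCoset Q (C i)) (hdisj : Pairwise (Function.onFun Disjoint C))
    (hCX : ∀ i, C i ⊆ X) :
    (∑' i, idxInv Q (C i) ≤ totalIndex Q Y) ∧ totalIndex Q X ≤ totalIndex Q Y :=
  ⟨tsum_idxInv_le_totalIndex hQ hcoset hdisj fun i => (hCX i).trans hXY, totalIndex_mono hQ hXY⟩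

/-- Let `X ⊆ Y ⊆ L = ℤ^n` and let `(Cᵢ)_{i ∈ I}` be a finite or
countable family of pairwise disjoint cosets whose union is the coset part `C(X)`.
Then `∑_{i ∈ I} [L : Cᵢ]⁻¹ ≤ c(Y)`.  In particular, the total index is monotone:
`c(X) ≤ c(Y)`. -/
theorem stmt15 {n : ℕ} (Q : Matrix (Fin n) (Fin n) ℤ) (hQ : IsInflation Q)
    (X Y : Set (LatZ n)) (hXY : X ⊆ Y)
    {I : Type} [Countable I] (C : I → Set (LatZ n))
    (hcoset : ∀ i, IsCoset Q (C i))
    (hdisj : Pairwise (Function.onFun Disjoint C))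
    (hunion : ⋃ i, C i = cosetPart Q X) :
    (∑' i, idxInv Q (C i) ≤ totalIndex Q Y) ∧ totalIndex Q X ≤ totalIndex Q Y :=
  stmt15_general hQ.1 hXY hcoset hdisj fun i =>
    (Set.subset_iUnion C i).trans (hunion.subset.trans (cosetPart_subset Q X))
end

section
/- In ℤ², define e₁=(0,0), e₂=(1,0), e₃=(1,1), e₄=(0,1), the maps h_i : x ↦ 2x + e_i (i=1,…,4), and the 4×4 matrix function system Φ with rows Φ₁=({h₁,h₃},{h₁},∅,{h₁}), Φ₂=({h₂},{h₂,h₄},{h₂},∅), Φ₃=(∅,{h₃},{h₃,h₁},{h₃}), Φ₄=({h₄},∅,{h₄},{h₄,h₂}). Define U₁ := ⋃_{k≥0}⋃_{t=0}^{2^k−1}(2^k(2,0)+t(1,1)+2^k·4ℤ²) ∪ ⋃_{k≥0}⋃_{t=0}^{2^k−1}(2^k(0,2)+t(1,1)+2^k·4ℤ²) ∪ {t(1,1) : t ∈ ℤ}; U₂ := ⋃_{k≥0}⋃_{t=0}^{2^k−1}((−1,0)+2^k(2,0)+t(−1,1)+2^k·4ℤ²) ∪ ⋃_{k≥0}⋃_{t=0}^{2^k−1}((−1,0)+2^k(0,2)+t(−1,1)+2^k·4ℤ²)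 ∪ {(0,−1)+t(1,−1) : t ≥ 0}; U₃ := ⋃_{k≥0}⋃_{t=0}^{2^k−1}((−1,−1)+2^k(2,0)+t(−1,−1)+2^k·4ℤ²) ∪ ⋃_{k≥0}⋃_{t=0}^{2^k−1}((−1,−1)+2^k(0,2)+t(−1,−1)+2^k·4ℤ²); U₄ := ⋃_{k≥0}⋃_{t=0}^{2^k−1}((0,−1)+2^k(2,0)+t(1,−1)+2^k·4ℤ²) ∪ ⋃_{k≥0}⋃_{t=0}^{2^k−1}((0,−1)+2^k(0,2)+t(1,−1)+2^k·4ℤ²) ∪ {(−1,0)+t(−1,1) : t ≥ 0}. Then U₁, U₂, U₃, U₄ are pairwise disjoint, U₁ ∪ U₂ ∪ U₃ ∪ U₄ = ℤ², and for each i = 1,…,4, U_i = ⋃_{j=1}^4 ⋃_{f ∈ Φ_{ij}} f(U_j). -/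
/-! The 2-dimensional chair tiling substitution on the lattice `ℤ²` (here `ℤ × ℤ`),
following Lee–Moody, "Lattice Substitution Systems and Model Sets". -/

/-- The basic orientation vectors `e₁ = (0,0)`, `e₂ = (1,0)`, `e₃ = (1,1)`,
`e₄ = (0,1)` (indexed here by `Fin 4` as `e 0, e 1, e 2, e 3`). -/
def chairE : Fin 4 → ℤ × ℤ
  | 0 => (0, 0)
  | 1 => (1, 0)
  | 2 => (1, 1)
  | 3 => (0, 1)

/-- The affine inflation maps `hᵢ : x ↦ 2x + eᵢ` on `ℤ²`. -/
def chairH (i : Fin 4) : ℤ × ℤ → ℤ × ℤ :=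
  fun x => (2 : ℤ) • x + chairE i

/-- The set `⋃_{k ≥ 0} ⋃_{t = 0}^{2^k - 1} (a + 2^k g + t d + 2^k · 4 ℤ²)`,
a building block of the chair point sets (`a` a base point, `g` a generating vector,
`d` a diagonal direction). -/
def chairPart (a d g : ℤ × ℤ) : Set (ℤ × ℤ) :=
  ⋃ (k : ℕ), ⋃ (t : ℕ), ⋃ (_ : t < 2 ^ k),
    {p | ∃ v : ℤ × ℤ, p = a + ((2 : ℤ) ^ k) • g + (t : ℤ) • d + ((2 : ℤ) ^ k * 4) • v}

/-- The four chair point sets `U₁, U₂, U₃, U₄` (indexed here by `Fin 4` as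
`U 0, …, U 3`):
`U₁ = ⋃_{k,t} (2^k(2,0) + t(1,1) + 2^k·4ℤ²) ∪ ⋃_{k,t} (2^k(0,2) + t(1,1) + 2^k·4ℤ²)
      ∪ {t(1,1) : t ∈ ℤ}`,
`U₂ = ⋃_{k,t} ((-1,0) + 2^k(2,0) + t(-1,1) + 2^k·4ℤ²)
      ∪ ⋃_{k,t} ((-1,0) + 2^k(0,2) + t(-1,1) + 2^k·4ℤ²)
      ∪ {(0,-1) + t(1,-1) : t ≥ 0}`,
`U₃ = ⋃_{k,t} ((-1,-1) + 2^k(2,0) + t(-1,-1) + 2^k·4ℤ²)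
      ∪ ⋃_{k,t} ((-1,-1) + 2^k(0,2) + t(-1,-1) + 2^k·4ℤ²)`,
`U₄ = ⋃_{k,t} ((0,-1) + 2^k(2,0) + t(1,-1) + 2^k·4ℤ²)
      ∪ ⋃_{k,t} ((0,-1) + 2^k(0,2) + t(1,-1) + 2^k·4ℤ²)
      ∪ {(-1,0) + t(-1,1) : t ≥ 0}`,
where in each case `t` ranges over `0 ≤ t < 2^k`. -/
def chairU : Fin 4 → Set (ℤ × ℤ)
  | 0 => chairPart (0, 0) (1, 1) (2, 0) ∪ chairPart (0, 0) (1, 1) (0, 2) ∪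
      {p | ∃ t : ℤ, p = t • ((1, 1) : ℤ × ℤ)}
  | 1 => chairPart (-1, 0) (-1, 1) (2, 0) ∪ chairPart (-1, 0) (-1, 1) (0, 2) ∪
      {p | ∃ t : ℕ, p = ((0, -1) : ℤ × ℤ) + (t : ℤ) • ((1, -1) : ℤ × ℤ)}
  | 2 => chairPart (-1, -1) (-1, -1) (2, 0) ∪ chairPart (-1, -1) (-1, -1) (0, 2)
  | 3 => chairPart (0, -1) (1, -1) (2, 0) ∪ chairPart (0, -1) (1, -1) (0, 2) ∪
      {p | ∃ t : ℕ, p = ((-1, 0) : ℤ × ℤ) + (t : ℤ) • ((-1, 1) : ℤ × ℤ)}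

/-!
The orientation at a lattice point is a function of its binary digits. A point with `y - x = d`,
`d` even and nonzero, has orientation `0` or `2` according to the digit of `x` just below the lowest
nonzero digit of `d`; on the antidiagonals `x + y + 1 = d` the same digit decides between `3` and
`1`. The inflation `x ↦ 2x + e` doubles one of `y - x` and `x + y + 1`, and appends one digit to
`x`. If the doubled quantity was even, the deciding digit moves along with it and the orientation
survives; if it was odd, the deciding digit is the appended one and the orientation is that of `e`.
The lines `d = 0`, where no digit decides, are mapped into themselves with their orientations.
So the `Uᵢ` are the fibres of a single function that intertwines each inflation with a self-map of
`Fin 4`, which gives the partition and the fixed-point equations together.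
-/

section Inflation

variable {X ι κ : Type*} {f : X → ι} {h : κ → X → X} {σ : κ → ι → ι}

theorem preimage_singleton_eq_iUnion_image (hsurj : ∀ x, ∃ m y, h m y = x)
    (hσ : ∀ m, Function.Semiconj f (h m) (σ m)) (i : ι) :
    f ⁻¹' {i} = ⋃ (m) (j) (_ : σ m j = i), h m '' (f ⁻¹' {j}) := by
  ext x
  simp only [Set.mem_preimage, Set.mem_singleton_iff, Set.mem_iUnion, Set.mem_image]
  constructor
  · rintro rfl
    obtain ⟨m, y, rfl⟩ := hsurj x
    exact ⟨m, f y, (hσ m y).symm, y, rfl, rfl⟩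
  · rintro ⟨m, _, rfl, y, rfl, rfl⟩
    exact hσ m y

end Inflation

theorem padicValInt_pow_mul_of_not_dvd {p : ℕ} [hp : Fact p.Prime] {c : ℤ} (hc : ¬ (p : ℤ) ∣ c)
    (k : ℕ) : padicValInt p (p ^ k * c) = k := by
  have hc0 : c ≠ 0 := by rintro rfl; exact hc (dvd_zero _)
  have hpk : (p : ℤ) ^ k ≠ 0 := pow_ne_zero k (Int.natCast_ne_zero.2 hp.out.ne_zero)
  rw [padicValInt.mul hpk hc0, padicValInt.eq_zero_of_not_dvd hc, add_zero, ← Nat.cast_pow,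
    padicValInt.of_nat, padicValNat.prime_pow]

/-- The binary digit of `x` (in two's complement) just below the position of the lowest nonzero
binary digit of `d`; it tells apart the two orientations that share a family of parallel diagonals.
It is meant for `d` even and nonzero: otherwise the truncated exponent makes it the last digit. -/
def pivotDigit (d x : ℤ) : ℤ :=
  x / 2 ^ (padicValInt 2 d - 1) % 2

theorem pivotDigit_eq_zero_or_one (d x : ℤ) : pivotDigit d x = 0 ∨ pivotDigit d x = 1 :=
  Int.emod_two_eq _

theorem pivotDigit_neg (d x : ℤ) : pivotDigit (-d) x = pivotDigit d x := by
  simp only [pivotDigit, padicValInt, Int.natAbs_neg]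

theorem pivotDigit_neg_one_sub (d x : ℤ) : pivotDigit d (-1 - x) = 1 - pivotDigit d x := by
  have hdiv (n : ℕ) : (-1 - x) / 2 ^ n = -1 - x / 2 ^ n := by
    have hpos : (0 : ℤ) < 2 ^ n := by positivity
    have hlt := Int.emod_lt_of_pos x hpos
    have hnonneg := Int.emod_nonneg x hpos.ne'
    have hx := Int.mul_ediv_add_emod x (2 ^ n)
    rw [Int.ediv_eq_iff_of_pos hpos]
    constructor <;> linarith
  rw [pivotDigit, hdiv, pivotDigit]
  omega

theorem pivotDigit_two_pow_mul_odd {c : ℤ} (hc : Odd c) (k : ℕ) (x : ℤ) :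
    pivotDigit (2 ^ (k + 1) * c) x = x / 2 ^ k % 2 := by
  have hval : padicValInt 2 (2 ^ (k + 1) * c) = k + 1 :=
    padicValInt_pow_mul_of_not_dvd (by simpa [← even_iff_two_dvd] using hc) (k + 1)
  rw [pivotDigit, hval, Nat.add_sub_cancel]

theorem pivotDigit_two_mul_of_odd {c : ℤ} (hc : Odd c) (x : ℤ) :
    pivotDigit (2 * c) x = x % 2 := by
  simpa using pivotDigit_two_pow_mul_odd hc 0 x

theorem exists_eq_two_pow_succ_mul_odd {d : ℤ} (hd : Even d) (hd0 : d ≠ 0) :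
    ∃ (k : ℕ) (c : ℤ), Odd c ∧ d = 2 ^ (k + 1) * c := by
  have hfin : FiniteMultiplicity (2 : ℤ) d := Int.finiteMultiplicity_iff.2 ⟨by decide, hd0⟩
  obtain ⟨c, hdc, hc⟩ := hfin.exists_eq_pow_mul_and_not_dvd
  obtain ⟨k, hk⟩ : ∃ k, multiplicity 2 d = k + 1 :=
    Nat.exists_eq_succ_of_ne_zero (multiplicity_ne_zero.2 hd.two_dvd)
  rw [← even_iff_two_dvd, Int.not_even_iff_odd] at hc
  exact ⟨k, c, hc, hk ▸ hdc⟩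

theorem pivotDigit_two_mul {d r : ℤ} (hd : Even d) (hd0 : d ≠ 0) (hr : r / 2 = 0) (x : ℤ) :
    pivotDigit (2 * d) (2 * x + r) = pivotDigit d x := by
  obtain ⟨k, c, hc, rfl⟩ := exists_eq_two_pow_succ_mul_odd hd hd0
  have hdiv : (2 * x + r) / 2 = x := by omega
  rw [← mul_assoc, ← pow_succ', pivotDigit_two_pow_mul_odd hc, pivotDigit_two_pow_mul_odd hc,
    pow_succ', ← Int.ediv_ediv_of_nonneg zero_le_two, hdiv]

theorem pivotDigit_two_pow_mul_odd_eq_zero_iff {c x : ℤ} (hc : Odd c) (k : ℕ) :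
    pivotDigit (2 ^ (k + 1) * c) x = 0 ↔
      ∃ (t : ℕ) (b : ℤ), t < 2 ^ k ∧ x = 2 ^ k * (2 * b) + t := by
  have hpos : (0 : ℤ) < 2 ^ k := by positivity
  rw [pivotDigit_two_pow_mul_odd hc]
  constructor
  · intro hdigit
    obtain ⟨t, ht⟩ := Int.eq_ofNat_of_zero_le (Int.emod_nonneg x hpos.ne')
    obtain ⟨b, hb⟩ : 2 ∣ x / 2 ^ k := Int.dvd_of_emod_eq_zero hdigit
    have hlt : (t : ℤ) < 2 ^ k := ht ▸ Int.emod_lt_of_pos x hpos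
    exact ⟨t, b, by exact_mod_cast hlt, by rw [← hb, ← ht, Int.mul_ediv_add_emod]⟩
  · rintro ⟨t, b, ht, rfl⟩
    have hlt : (t : ℤ) < 2 ^ k := by exact_mod_cast ht
    rw [Int.mul_add_ediv_left _ _ hpos.ne', Int.ediv_eq_zero_of_lt (by positivity) hlt, add_zero,
      Int.mul_emod_right]

section ChairPart

variable {a b ε δ u v x y : ℤ} (hε : IsUnit ε) (hδ : IsUnit δ)
  (hx : x = a + ε * u) (hy : y = b + δ * v)

include hε hδ hx hy

theorem mem_chairPart_iff (g h : ℤ) :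
    (x, y) ∈ chairPart (a, b) (ε, δ) (2 * g, 2 * h) ↔
      ∃ k t : ℕ, t < 2 ^ k ∧ ∃ p q : ℤ, p ≡ g [ZMOD 2] ∧ q ≡ h [ZMOD 2] ∧
        u = 2 ^ k * (2 * p) + t ∧ v = 2 ^ k * (2 * q) + t := by
  have hcoord {s : ℤ} (hs : IsUnit s) (a u g : ℤ) (k t : ℕ) :
      (∃ w, a + s * u = a + 2 ^ k * (2 * g) + t * s + 2 ^ k * 4 * w) ↔
        ∃ p, p ≡ g [ZMOD 2] ∧ u = 2 ^ k * (2 * p) + t := by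
    simp only [Int.modEq_iff_add_fac]
    rcases Int.isUnit_iff.1 hs with rfl | rfl
    · constructor
      · rintro ⟨w, hw⟩
        exact ⟨g + 2 * w, ⟨-w, by ring⟩, by linear_combination hw⟩
      · rintro ⟨p, ⟨w, rfl⟩, hu⟩
        exact ⟨-w, by linear_combination hu⟩
    · constructor
      · rintro ⟨w, hw⟩
        exact ⟨-g - 2 * w, ⟨g + w, by ring⟩, by linear_combination -hw⟩
      · rintro ⟨p, ⟨w, rfl⟩, hu⟩
        exact ⟨-w - p, by linear_combination -hu⟩
  simp only [hx, hy, chairPart, Set.mem_iUnion, Set.mem_ofPred_eq, Prod.exists, Prod.smul_mk,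
    Prod.mk_add_mk, Prod.mk.injEq, smul_eq_mul, exists_prop, exists_and_left, exists_and_right,
    hcoord hε, hcoord hδ]
  grind

theorem mem_chairPart_union_iff :
    (x, y) ∈ chairPart (a, b) (ε, δ) (2, 0) ∪ chairPart (a, b) (ε, δ) (0, 2) ↔
      Even (v - u) ∧ v - u ≠ 0 ∧ pivotDigit (v - u) u = 0 := by
  have hhor := mem_chairPart_iff hε hδ hx hy 1 0
  have hver := mem_chairPart_iff hε hδ hx hy 0 1
  norm_num only at hhor hver
  rw [Set.mem_union, hhor, hver]
  constructor
  · have hdigit {k t : ℕ} {p q : ℤ} (ht : t < 2 ^ k) (hpq : Odd (q - p))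
        (hu : u = 2 ^ k * (2 * p) + t) (hv : v = 2 ^ k * (2 * q) + t) :
        Even (v - u) ∧ v - u ≠ 0 ∧ pivotDigit (v - u) u = 0 := by
      have hvu : v - u = 2 ^ (k + 1) * (q - p) := by rw [hu, hv]; ring
      have hpq0 : q - p ≠ 0 := by rintro h; simp [h] at hpq
      rw [hvu]
      exact ⟨(even_two.pow_of_ne_zero k.succ_ne_zero).mul_right _,
        mul_ne_zero (by positivity) hpq0,
        (pivotDigit_two_pow_mul_odd_eq_zero_iff hpq k).2 ⟨t, p, ht, hu⟩⟩
    rintro (⟨k, t, ht, p, q, hp, hq, hu, hv⟩ | ⟨k, t, ht, p, q, hp, hq, hu, hv⟩) <;>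
      exact hdigit ht (by grind [Int.ModEq]) hu hv
  · rintro ⟨heven, hne, hdigit⟩
    obtain ⟨k, c, hc, hvu⟩ := exists_eq_two_pow_succ_mul_odd heven hne
    rw [hvu, pivotDigit_two_pow_mul_odd_eq_zero_iff hc] at hdigit
    obtain ⟨t, p, ht, hu⟩ := hdigit
    have hv : v = 2 ^ k * (2 * (p + c)) + t := by linear_combination hvu + hu
    rcases Int.even_or_odd p with hp | hp
    · exact Or.inr ⟨k, t, ht, p, p + c, by grind [Int.ModEq], by grind [Int.ModEq], hu, hv⟩
    · exact Or.inl ⟨k, t, ht, p, p + c, by grind [Int.ModEq], by grind [Int.ModEq], hu, hv⟩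

end ChairPart

section ChairU

variable {x y : ℤ}

theorem mem_chairU_zero_iff :
    (x, y) ∈ chairU 0 ↔ Even (y - x) ∧ (y - x = 0 ∨ pivotDigit (y - x) x = 0) := by
  have hline : (∃ t : ℤ, (x, y) = t • ((1, 1) : ℤ × ℤ)) ↔ y - x = 0 := by
    simp [eq_comm, sub_eq_zero]
  rw [chairU, Set.mem_union, Set.mem_ofPred_eq, hline,
    mem_chairPart_union_iff (u := x) (v := y) isUnit_one isUnit_one (by ring) (by ring)]
  grind

theorem mem_chairU_one_iff :
    (x, y) ∈ chairU 1 ↔ Even (x + y + 1) ∧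
      (x + y + 1 = 0 ∧ 0 ≤ x ∨ x + y + 1 ≠ 0 ∧ pivotDigit (x + y + 1) x = 1) := by
  have hline : (∃ t : ℕ, (x, y) = ((0, -1) : ℤ × ℤ) + (t : ℤ) • ((1, -1) : ℤ × ℤ)) ↔
      x + y + 1 = 0 ∧ 0 ≤ x := by
    simp only [Prod.smul_mk, smul_eq_mul, Prod.mk_add_mk, Prod.mk.injEq]
    constructor
    · rintro ⟨t, ht⟩
      omega
    · rintro ⟨hxy, hx⟩
      exact ⟨x.toNat, by omega⟩
  have hdiff : y - (-1 - x) = x + y + 1 := by ring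
  rw [chairU, Set.mem_union, Set.mem_ofPred_eq, hline,
    mem_chairPart_union_iff (u := -1 - x) (v := y) isUnit_one.neg isUnit_one (by ring) (by ring),
    hdiff, pivotDigit_neg_one_sub]
  grind

theorem mem_chairU_two_iff :
    (x, y) ∈ chairU 2 ↔ Even (y - x) ∧ y - x ≠ 0 ∧ pivotDigit (y - x) x = 1 := by
  have hdiff : -1 - y - (-1 - x) = -(y - x) := by ring
  rw [chairU, mem_chairPart_union_iff (u := -1 - x) (v := -1 - y) isUnit_one.neg isUnit_one.neg
    (by ring) (by ring), hdiff, pivotDigit_neg, pivotDigit_neg_one_sub]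
  grind

theorem mem_chairU_three_iff :
    (x, y) ∈ chairU 3 ↔ Even (x + y + 1) ∧
      (x + y + 1 = 0 ∧ x < 0 ∨ x + y + 1 ≠ 0 ∧ pivotDigit (x + y + 1) x = 0) := by
  have hline : (∃ t : ℕ, (x, y) = ((-1, 0) : ℤ × ℤ) + (t : ℤ) • ((-1, 1) : ℤ × ℤ)) ↔
      x + y + 1 = 0 ∧ x < 0 := by
    simp only [Prod.smul_mk, smul_eq_mul, Prod.mk_add_mk, Prod.mk.injEq]
    constructor
    · rintro ⟨t, ht⟩
      omega
    · rintro ⟨hxy, hx⟩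
      exact ⟨y.toNat, by omega⟩
  have hdiff : -1 - y - x = -(x + y + 1) := by ring
  rw [chairU, Set.mem_union, Set.mem_ofPred_eq, hline,
    mem_chairPart_union_iff (u := x) (v := -1 - y) isUnit_one isUnit_one.neg (by ring) (by ring),
    hdiff, pivotDigit_neg]
  grind

end ChairU

/-- The index `i` of the set `chairU i` that contains `(x, y)`, as an explicit function whose
fibres are the four sets. Diagonals `y - x = d` with `d` even carry the orientations `0` and `2`,
antidiagonals `x + y + 1 = d` with `d` even carry `1` and `3`. -/
def chairIndex : ℤ × ℤ → Fin 4 := fun (x, y) ↦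
  if Even (y - x) then
    if y - x = 0 ∨ pivotDigit (y - x) x = 0 then 0 else 2
  else if x + y + 1 = 0 then
    if 0 ≤ x then 1 else 3
  else
    if pivotDigit (x + y + 1) x = 0 then 3 else 1

theorem chairU_eq_preimage (i : Fin 4) : chairU i = chairIndex ⁻¹' {i} := by
  ext ⟨x, y⟩
  have hparity : Even (x + y + 1) ↔ ¬ Even (y - x) := by grind
  have hdiag := pivotDigit_eq_zero_or_one (y - x) x
  have hanti := pivotDigit_eq_zero_or_one (x + y + 1) x
  simp only [Set.mem_preimage, Set.mem_singleton_iff, chairIndex]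
  fin_cases i
  · change (x, y) ∈ chairU 0 ↔ _ = 0
    rw [mem_chairU_zero_iff]
    grind
  · change (x, y) ∈ chairU 1 ↔ _ = 1
    rw [mem_chairU_one_iff]
    grind
  · change (x, y) ∈ chairU 2 ↔ _ = 2
    rw [mem_chairU_two_iff]
    grind
  · change (x, y) ∈ chairU 3 ↔ _ = 3
    rw [mem_chairU_three_iff]
    grind

/-- The orientation of the image under `chairH m` of a point of orientation `j`. The matrix entry
`Φᵢⱼ` consists of the maps `chairH m` with `chairInflate m j = i`. -/
def chairInflate (m j : Fin 4) : Fin 4 :=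
  if j = m + 2 then j else m

theorem exists_chairH_eq (p : ℤ × ℤ) : ∃ m q, chairH m q = p := by
  obtain ⟨x, y⟩ := p
  rcases Int.even_or_odd' x with ⟨a, rfl | rfl⟩ <;>
    rcases Int.even_or_odd' y with ⟨b, rfl | rfl⟩
  · exact ⟨0, (a, b), by simp [chairH, chairE]⟩
  · exact ⟨3, (a, b), by simp [chairH, chairE]⟩
  · exact ⟨1, (a, b), by simp [chairH, chairE]⟩
  · exact ⟨2, (a, b), by simp [chairH, chairE]⟩

section Inflate

variable {x y r : ℤ}

theorem chairIndex_diagonal (hr : r = 0 ∨ r = 1) :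
    chairIndex (2 * x + r, 2 * y + r) =
      if Even (y - x) then chairIndex (x, y) else if r = 0 then 0 else 2 := by
  have hdiff : 2 * y + r - (2 * x + r) = 2 * (y - x) := by ring
  have hr2 : r / 2 = 0 := by omega
  simp only [chairIndex, hdiff, even_two_mul, if_true, mul_eq_zero, OfNat.ofNat_ne_zero, false_or]
  by_cases heven : Even (y - x)
  · by_cases hline : y - x = 0
    · simp only [hline, true_or, if_true, Even.zero]
    · simp only [heven, pivotDigit_two_mul heven hline hr2, if_true]
  · have hodd : Odd (y - x) := Int.not_even_iff_odd.1 heven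
    rw [pivotDigit_two_mul_of_odd hodd]
    grind

theorem chairIndex_antidiagonal (hr : r = 0 ∨ r = 1) :
    chairIndex (2 * x + r, 2 * y + (1 - r)) =
      if Even (y - x) then if r = 0 then 3 else 1 else chairIndex (x, y) := by
  have hsum : 2 * x + r + (2 * y + (1 - r)) + 1 = 2 * (x + y + 1) := by ring
  have hodd : ¬ Even (2 * y + (1 - r) - (2 * x + r)) := by grind
  have hr2 : r / 2 = 0 := by omega
  simp only [chairIndex, hsum, hodd, if_false]
  by_cases heven : Even (y - x)
  · have hodd : Odd (x + y + 1) := by grind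
    rw [pivotDigit_two_mul_of_odd hodd]
    grind
  · have heven' : Even (x + y + 1) := by grind
    by_cases hline : x + y + 1 = 0
    · grind
    · rw [pivotDigit_two_mul heven' hline hr2]
      grind

end Inflate

theorem chairIndex_semiconj (m : Fin 4) :
    Function.Semiconj chairIndex (chairH m) (chairInflate m) := by
  rintro ⟨x, y⟩
  have hparity : Even (y - x) ↔ chairIndex (x, y) = 0 ∨ chairIndex (x, y) = 2 := by
    grind [chairIndex]
  fin_cases m
  · change chairIndex (2 * x + 0, 2 * y + 0) = chairInflate 0 (chairIndex (x, y))
    simp only [chairIndex_diagonal (Or.inl rfl), hparity]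
    generalize chairIndex (x, y) = j
    decide +revert
  · change chairIndex (2 * x + 1, 2 * y + (1 - 1)) = chairInflate 1 (chairIndex (x, y))
    simp only [chairIndex_antidiagonal (Or.inr rfl), hparity]
    generalize chairIndex (x, y) = j
    decide +revert
  · change chairIndex (2 * x + 1, 2 * y + 1) = chairInflate 2 (chairIndex (x, y))
    simp only [chairIndex_diagonal (Or.inr rfl), hparity]
    generalize chairIndex (x, y) = j
    decide +revert
  · change chairIndex (2 * x + 0, 2 * y + (1 - 0)) = chairInflate 3 (chairIndex (x, y))
    simp only [chairIndex_antidiagonal (Or.inl rfl), hparity]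
    generalize chairIndex (x, y) = j
    decide +revert

theorem chairU_eq_biUnion_image {i : Fin 4} {s : Finset (Fin 4 × Fin 4)}
    (hs : ∀ m j, (m, j) ∈ s ↔ chairInflate m j = i) :
    chairU i = ⋃ p ∈ s, chairH p.1 '' chairU p.2 := by
  simp only [chairU_eq_preimage]
  rw [preimage_singleton_eq_iUnion_image exists_chairH_eq chairIndex_semiconj]
  simp only [Set.iUnion_prod', hs]

/-- The chair point sets `U₁, U₂, U₃, U₄ ⊆ ℤ²` are pairwise
disjoint, their union is all of `ℤ²`, and they form a fixed point of the chair matrix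
function system `Φ` with rows
`Φ₁ = ({h₁,h₃}, {h₁}, ∅, {h₁})`, `Φ₂ = ({h₂}, {h₂,h₄}, {h₂}, ∅)`,
`Φ₃ = (∅, {h₃}, {h₃,h₁}, {h₃})`, `Φ₄ = ({h₄}, ∅, {h₄}, {h₄,h₂})`:
that is, `Uᵢ = ⋃ⱼ ⋃_{f ∈ Φᵢⱼ} f(Uⱼ)` for each `i = 1, …, 4`. -/
theorem stmt19 :
    Pairwise (Function.onFun Disjoint chairU) ∧
    (⋃ i, chairU i) = Set.univ ∧
    chairU 0 = chairH 0 '' chairU 0 ∪ chairH 2 '' chairU 0 ∪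
      chairH 0 '' chairU 1 ∪ chairH 0 '' chairU 3 ∧
    chairU 1 = chairH 1 '' chairU 0 ∪ chairH 1 '' chairU 1 ∪
      chairH 3 '' chairU 1 ∪ chairH 1 '' chairU 2 ∧
    chairU 2 = chairH 2 '' chairU 1 ∪ chairH 2 '' chairU 2 ∪
      chairH 0 '' chairU 2 ∪ chairH 2 '' chairU 3 ∧
    chairU 3 = chairH 3 '' chairU 0 ∪ chairH 3 '' chairU 2 ∪
      chairH 3 '' chairU 3 ∪ chairH 1 '' chairU 3 := by
  have hfibre : chairU = fun i ↦ chairIndex ⁻¹' {i} := funext chairU_eq_preimage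
  refine ⟨?_, ?_, ?_, ?_, ?_, ?_⟩
  · rw [hfibre]
    exact pairwise_disjoint_fiber chairIndex
  · simp [hfibre, Set.eq_univ_iff_forall]
  · simpa only [Finset.set_biUnion_insert, Finset.set_biUnion_singleton, Set.union_assoc] using
      chairU_eq_biUnion_image (i := 0) (s := {(0, 0), (2, 0), (0, 1), (0, 3)}) (by decide)
  · simpa only [Finset.set_biUnion_insert, Finset.set_biUnion_singleton, Set.union_assoc] using
      chairU_eq_biUnion_image (i := 1) (s := {(1, 0), (1, 1), (3, 1), (1, 2)}) (by decide)
  · simpa only [Finset.set_biUnion_insert, Finset.set_biUnion_singleton, Set.union_assoc] using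
      chairU_eq_biUnion_image (i := 2) (s := {(2, 1), (2, 2), (0, 2), (2, 3)}) (by decide)
  · simpa only [Finset.set_biUnion_insert, Finset.set_biUnion_singleton, Set.union_assoc] using
      chairU_eq_biUnion_image (i := 3) (s := {(3, 0), (3, 2), (3, 3), (1, 3)}) (by decide)
end
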